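/- Let D be a (not necessarily commutative) division semiring with idempotent addition, and let f : ℤ_max →+* D be an injective semiring homomorphism whose range lies in the center of D. If the subgroup Z(f) := {w ∈ Dˣ : ∃ a : ℤ, (w : D) = f (trop a)} has finite index in Dˣ, then D is selective: for all x, y ∈ D, x + y = x or x + y = y. -/

import Mathlib

open Tropical

/-- The subgroup `Z(f)` of `Dˣ` consisting of units lying in the image under `f` of the
nonzero elements of `ℤ_max = Tropical (WithTop ℤ)`. -/
def tropUnitSubgroup {D : Type*} [DivisionSemiring D]
    (f : Tropical (WithTop ℤ) →+* D) : Subgroup Dˣ where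
  carrier := {w : Dˣ | ∃ a : ℤ, (w : D) = f (trop (a : WithTop ℤ))}
  one_mem' := ⟨0, by simp⟩
  mul_mem' := by
    rintro v w ⟨a, ha⟩ ⟨b, hb⟩
    refine ⟨a + b, ?_⟩
    rw [Units.val_mul, ha, hb, ← map_mul, ← Tropical.trop_add, ← WithTop.coe_add]
  inv_mem' := by
    rintro w ⟨a, ha⟩
    refine ⟨-a, Units.inv_eq_of_mul_eq_one_right ?_⟩
    have h1 : trop ((a : WithTop ℤ)) * trop (((-a : ℤ) : WithTop ℤ)) = 1 := by
      rw [← Tropical.trop_add, ← WithTop.coe_add, add_neg_cancel, WithTop.coe_zero,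
        Tropical.trop_zero]
    rw [ha, ← map_mul, h1, map_one]

/-- Let `D` be a division semiring with idempotent addition and `f : ℤ_max →+* D` an
injective semiring homomorphism whose range lies in the center of `D`.  If `Z(f)` has finite
index in `Dˣ`, then `D` is selective. -/
theorem finite_unit_index_selective {D : Type*} [DivisionSemiring D]
    (hidem : ∀ x : D, x + x = x)
    (f : Tropical (WithTop ℤ) →+* D) (hf : Function.Injective f)
    (hcentral : ∀ a : Tropical (WithTop ℤ), f a ∈ Set.center D)
    (hui : (tropUnitSubgroup f).FiniteIndex) :
    ∀ x y : D, x + y = x ∨ x + y = y := by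
  have key : ∀ x : D, x + 1 = x ∨ x + 1 = 1 := by
    intro x
    by_cases hx : x = 0
    · right; simp [hx]
    obtain ⟨n, hn, -, a, ha⟩ :=
      Subgroup.exists_pow_mem_of_index_ne_zero hui.index_ne_zero (Units.mk0 x hx)
    obtain ⟨m, rfl⟩ : ∃ m, n = m + 1 := ⟨n - 1, by omega⟩
    rw [Units.val_pow_eq_pow_val, Units.val_mk0] at ha
    obtain ⟨t, ht⟩ : ∃ t, t = ∑ i ∈ Finset.range m, x ^ (i + 1) := ⟨_, rfl⟩
    have hs : x * (t + 1) = t + x ^ (m + 1) := by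
      have h1 : t + 1 = ∑ i ∈ Finset.range (m + 1), x ^ i := by
        rw [Finset.sum_range_succ', ht, pow_zero]
      rw [h1, Finset.mul_sum, ht, ← Finset.sum_range_succ]
      exact Finset.sum_congr rfl fun i _ => (pow_succ' x i).symm
    have hs0 : t + 1 ≠ 0 := by
      intro h
      have : (1 : D) = 0 := by
        calc (1 : D) = (t + 1) + 1 := by rw [h, zero_add]
          _ = t + 1 := by rw [add_assoc, hidem]
          _ = 0 := h
      exact one_ne_zero this
    have hsum : (x + 1) * (t + 1) = t + (x ^ (m + 1) + 1) := by
      rw [add_mul, one_mul, hs]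
      calc t + x ^ (m + 1) + (t + 1) = (t + t) + (x ^ (m + 1) + 1) := by
            rw [add_add_add_comm]
        _ = _ := by rw [hidem]
    have hcmp : x ^ (m + 1) + 1 = x ^ (m + 1) ∨ x ^ (m + 1) + 1 = 1 := by
      rw [ha, ← map_one f, ← map_add]
      rcases le_total (trop (a : WithTop ℤ)) 1 with h | h
      · left; rw [Tropical.add_eq_left h]
      · right; rw [Tropical.add_eq_right h]
    rcases hcmp with h | h
    · left
      apply mul_right_cancel₀ hs0
      rw [hsum, h, hs]
    · right
      apply mul_right_cancel₀ hs0
      rw [hsum, h, one_mul]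
  intro x y
  by_cases hy : y = 0
  · left; simp [hy]
  have hxy : x * y⁻¹ * y = x := by rw [mul_assoc, inv_mul_cancel₀ hy, mul_one]
  rcases key (x * y⁻¹) with h | h
  · left
    have := congrArg (· * y) h
    simpa only [add_mul, hxy, one_mul] using this
  · right
    have := congrArg (· * y) h
    simpa only [add_mul, hxy, one_mul] using this
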